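/- Let S be a type, X and Y nonempty types, T : S → X → Y → S, and Bad ⊆ S. Define the monotone operator F on subsets of S by F(W) = {s ∈ S | s ∉ Bad and for every x ∈ X there exists y ∈ Y with T(s,x,y) ∈ W}, and let Safe denote the greatest fixed point of F. Then for every s ∈ S: s ∈ Safe if and only if there exists a system strategy f mapping nonempty finite sequences of elements of X to elements of Y such that for every infinite sequence x₁, x₂, … of elements of X, the induced play s^1 = s, s^{n+1} = T(s^n, x_n, f(x₁,…,x_n)) never visits a state in Bad (i.e., s^n ∉ Bad for every n ≥ 1). -/

import Mathlib

/-- The play induced from initial state `s` by a history-dependent system strategy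
`f` (mapping nonempty finite sequences of environment actions to system actions) and
an infinite sequence `x` of environment actions. -/
def stratPlay {S X Y : Type*} (T : S → X → Y → S) (s : S)
    (f : {l : List X // l ≠ []} → Y) (x : ℕ → X) : ℕ → S
  | 0 => s
  | n + 1 =>
      T (stratPlay T s f x n) (x n)
        (f ⟨List.ofFn fun i : Fin (n + 1) => x i, by simp⟩)

theorem stratPlay_shift {S X Y : Type*} (T : S → X → Y → S) (s : S)
    (f : {l : List X // l ≠ []} → Y) (x : ℕ → X) (n : ℕ) :
    stratPlay T s f x (n + 1) =
      stratPlay T (T s (x 0) (f ⟨[x 0], by simp⟩)) (fun l => f ⟨x 0 :: l.1, by simp⟩)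
        (fun i => x (i + 1)) n := by
  induction n with
  | zero => simp [stratPlay]
  | succ n ih =>
    rw [stratPlay, ih]
    conv_rhs => rw [stratPlay]
    congr 2
    apply Subtype.ext
    simp [List.ofFn_succ]

/-- The greatest fixed point of the safety operator
`F(W) = {s ∉ Bad | ∀ x, ∃ y, T s x y ∈ W}` consists exactly of the states from which
the system has a winning (history-dependent) strategy that avoids `Bad` forever. -/
theorem mem_greatest_fixed_point_iff_winning_strategy {S X Y : Type*}
    [Nonempty X] [Nonempty Y]
    (T : S → X → Y → S) (Bad : Set S)
    (F : Set S → Set S)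
    (hF : ∀ W : Set S, F W = {s : S | s ∉ Bad ∧ ∀ x : X, ∃ y : Y, T s x y ∈ W})
    (Safe : Set S)
    (hfix : F Safe = Safe)
    (hgreatest : ∀ W : Set S, F W = W → W ⊆ Safe)
    (s : S) :
    s ∈ Safe ↔
      ∃ f : {l : List X // l ≠ []} → Y, ∀ x : ℕ → X, ∀ n : ℕ,
        stratPlay T s f x n ∉ Bad := by
  constructor
  · intro hs
    have hS : ∀ t ∈ Safe, t ∉ Bad ∧ ∀ x : X, ∃ y : Y, T t x y ∈ Safe := by
      intro t ht
      rw [← hfix, hF] at ht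
      exact ht
    have hy : ∀ t x, ∃ y : Y, t ∈ Safe → T t x y ∈ Safe := by
      intro t x
      by_cases ht : t ∈ Safe
      · obtain ⟨y, hy⟩ := (hS t ht).2 x
        exact ⟨y, fun _ => hy⟩
      · exact ⟨Classical.arbitrary Y, fun h => absurd h ht⟩
    choose y hy using hy
    let st : List X → S := fun l => l.foldl (fun t x => T t x (y t x)) s
    refine ⟨fun l => y (st l.1.dropLast) (l.1.getLast l.2), fun x n => ?_⟩
    have key : ∀ n, stratPlay T s (fun l => y (st l.1.dropLast) (l.1.getLast l.2)) x n
        = st (List.ofFn fun i : Fin n => x i) ∧ st (List.ofFn fun i : Fin n => x i) ∈ Safe := by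
      intro n
      induction n with
      | zero => simpa [stratPlay, st] using hs
      | succ n ih =>
        have e : (List.ofFn fun i : Fin (n + 1) => x i)
            = (List.ofFn fun i : Fin n => x i) ++ [x n] := by
          rw [List.ofFn_succ_last]
          simp
        have e2 : st (List.ofFn fun i : Fin (n + 1) => x i)
            = T (st (List.ofFn fun i : Fin n => x i)) (x n)
              (y (st (List.ofFn fun i : Fin n => x i)) (x n)) := by
          rw [e]
          simp [st]
        refine ⟨?_, ?_⟩
        · rw [e2, stratPlay, ih.1]
          simp only [e, List.dropLast_concat, List.getLast_append_singleton]
        · rw [e2]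
          exact hy _ _ ih.2
    rw [(key n).1]
    exact (hS _ (key n).2).1
  · rintro ⟨f, hf⟩
    have hmono : Monotone F := by
      intro A B hAB t ht
      rw [hF] at ht ⊢
      exact ⟨ht.1, fun x => (ht.2 x).imp fun _ h => hAB h⟩
    let G : Set S →o Set S := ⟨F, hmono⟩
    have hG : OrderHom.gfp G ⊆ Safe := hgreatest _ G.map_gfp
    apply hG
    let W : Set S := {t | ∃ f : {l : List X // l ≠ []} → Y, ∀ x : ℕ → X, ∀ n : ℕ,
        stratPlay T t f x n ∉ Bad}
    have hW : W ≤ G W := by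
      rintro t ⟨g, hg⟩
      change t ∈ F W
      rw [hF]
      refine ⟨hg (fun _ => Classical.arbitrary X) 0, fun a => ⟨g ⟨[a], by simp⟩,
        fun l => g ⟨a :: l.1, by simp⟩, fun x n => ?_⟩⟩
      have h := hg (fun i => Nat.casesOn i a x) (n + 1)
      rw [stratPlay_shift] at h
      exact h
    exact G.le_gfp hW ⟨f, hf⟩
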